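/- Let N ≥ 2, let R be a unitary ring in which every R-module has finite projective dimension, and let P be an N-differential R-module (an R-module with an R-linear endomorphism d satisfying d^N = 0) that is projective as an R-module. If {}_sH(P) = ker(d^s)/im(d^{N−s}) = 0 for all 1 ≤ s ≤ N−1, then P is contractible: P is isomorphic, as an N-differential module, to a direct sum C ⊕ C ⊕ ⋯ ⊕ C of N identical summands with differential sending the i-th summand identically onto the (i+1)-st for 1 ≤ i ≤ N−1 and the N-th summand to zero. -/

import Mathlib

/-! Statement 19: Let `N ≥ 2` and let `R` be a ring in which every module has finite projective
dimension.  If `P` is an `N`-differential `R`-module (`d ^ N = 0`) that is projective over `R`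
and has `ₛH(P) = ker d^s / im d^{N-s} = 0` for all `1 ≤ s ≤ N-1`, then `P` is contractible:
there is a submodule `S ≤ P` such that `(v_0,…,v_{N-1}) ↦ Σ_i d^i v_i` is a bijection
`S^N ≃ P` — i.e. `P ≅ S ⊕ dS ⊕ ⋯ ⊕ d^{N-1}S` with `d` shifting the summands and killing the
last one. -/

/-- `M` has finite projective dimension over `R`: there is a finite resolution
`0 → P_len → ⋯ → P_1 → P_0 → M → 0` by projective modules (realized, without loss of
generality, as submodules of free modules). -/
def HasFinProjDim (R : Type) [Ring R] (M : Type) [AddCommGroup M] [Module R M] : Prop :=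
  ∃ (len : ℕ) (ι : ℕ → Type) (P : ∀ i, Submodule R (ι i →₀ R))
    (f : ∀ i, ↥(P (i + 1)) →ₗ[R] ↥(P i)) (g : ↥(P 0) →ₗ[R] M),
    (∀ i, Module.Projective R ↥(P i)) ∧
    (∀ i, len < i → P i = ⊥) ∧
    Function.Surjective g ∧
    LinearMap.ker g = LinearMap.range (f 0) ∧
    (∀ i, LinearMap.ker (f i) = LinearMap.range (f (i + 1)))

/-! Write `N = n + 1`. Exactness at `s = 1` says `ker d = im dⁿ`, and peeling off one power of `d`
at a time it also gives `ker dⁿ = im d`. Hence the periodic complex on `P` in which `d` and `dⁿ`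
alternate is exact, so `ker d` is its own second syzygy; as its projective dimension is finite, it
is projective. The surjection `dⁿ : P → im dⁿ = ker d` therefore splits, and a complement `S` of
`ker dⁿ` is the summand `C`: the translates `dⁱ S` exhaust `P` by induction along the filtration
`ker dˢ`, and they are independent because `dⁿ⁻ᵏ` isolates the component of lowest index `k`. -/

universe u v

open LinearMap CategoryTheory

section ProjectiveDimension

variable {R : Type u} [Ring R] [Small.{v} R]
  {M P Q : Type v} [AddCommGroup M] [Module R M] [AddCommGroup P] [Module R P]
  [AddCommGroup Q] [Module R Q]

theorem hasProjectiveDimensionLE_zero_iff_projective :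
    HasProjectiveDimensionLE (ModuleCat.of R M) 0 ↔ Module.Projective R M := by
  rw [← projective_iff_hasProjectiveDimensionLE_zero, ← IsProjective.iff_projective]

theorem hasProjectiveDimensionLE_succ_iff_ker [Module.Projective R P] {f : P →ₗ[R] M}
    (hf : Function.Surjective f) (n : ℕ) :
    HasProjectiveDimensionLE (ModuleCat.of R M) (n + 1) ↔
      HasProjectiveDimensionLE (ModuleCat.of R (ker f)) n :=
  (shortExact_shortComplexKer hf).hasProjectiveDimensionLT_X₃_iff n
    ((IsProjective.iff_projective P).mp ‹_›)

theorem hasProjectiveDimensionLE_range_succ_iff_ker [Module.Projective R P] (f : P →ₗ[R] M)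
    (n : ℕ) :
    HasProjectiveDimensionLE (ModuleCat.of R (range f)) (n + 1) ↔
      HasProjectiveDimensionLE (ModuleCat.of R (ker f)) n := by
  rw [hasProjectiveDimensionLE_succ_iff_ker f.surjective_rangeRestrict, ker_rangeRestrict]

theorem hasProjectiveDimensionLE_of_resolution (n : ℕ) {A : ℕ → Type v}
    [∀ i, AddCommGroup (A i)] [∀ i, Module R (A i)] [∀ i, Module.Projective R (A i)]
    [Subsingleton (A (n + 1))] (f : ∀ i, A (i + 1) →ₗ[R] A i) (g : A 0 →ₗ[R] M)
    (hg : Function.Surjective g) (hfg : ker g = range (f 0))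
    (hf : ∀ i, ker (f i) = range (f (i + 1))) :
    HasProjectiveDimensionLE (ModuleCat.of R M) n := by
  induction n generalizing M A with
  | zero =>
    have hg_inj : Function.Injective g := by
      rw [← ker_eq_bot, hfg, range_eq_bot]
      exact Subsingleton.elim _ _
    rw [hasProjectiveDimensionLE_zero_iff_projective]
    exact .of_equiv (LinearEquiv.ofBijective g ⟨hg_inj, hg⟩)
  | succ n ih =>
    rw [hasProjectiveDimensionLE_succ_iff_ker hg, hfg]
    exact ih (A := fun i ↦ A (i + 1)) (fun i ↦ f (i + 1)) (f 0).rangeRestrict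
      (f 0).surjective_rangeRestrict (by rw [ker_rangeRestrict, hf]) fun i ↦ hf (i + 1)

theorem HasFinProjDim.projectiveDimension_ne_top {R M : Type} [Ring R] [AddCommGroup M]
    [Module R M] (h : HasFinProjDim R M) : projectiveDimension (ModuleCat.of R M) ≠ ⊤ := by
  obtain ⟨len, ι, A, f, g, hA, hlen, hg, hfg, hf⟩ := h
  have : Subsingleton (A (len + 1)) := by
    rw [hlen _ len.lt_succ_self]
    infer_instance
  exact (projectiveDimension_ne_top_iff _).mpr
    ⟨len, hasProjectiveDimensionLE_of_resolution len (A := fun i ↦ A i) f g hg hfg hf⟩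

theorem projective_ker_of_periodic_of_projectiveDimension_ne_top [Module.Projective R P]
    [Module.Projective R Q] {f : P →ₗ[R] Q} {g : Q →ₗ[R] P} (hfg : ker f = range g)
    (hgf : ker g = range f) (hfin : projectiveDimension (ModuleCat.of R (ker f)) ≠ ⊤) :
    Module.Projective R (ker f) := by
  obtain ⟨n, hn⟩ := (projectiveDimension_ne_top_iff _).mp hfin
  rw [← hasProjectiveDimensionLE_zero_iff_projective]
  induction n with
  | zero => exact hn
  | succ n ih =>
    apply ih
    have hker_g : HasProjectiveDimensionLE (ModuleCat.of R (ker g)) n := by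
      rwa [hfg, hasProjectiveDimensionLE_range_succ_iff_ker] at hn
    rw [← hasProjectiveDimensionLE_range_succ_iff_ker, ← hgf]
    exact hasProjectiveDimensionLT_of_ge _ (n + 1) _ (by lia)

end ProjectiveDimension

theorem exists_isCompl_ker_of_projective_range {R M M' : Type*} [Ring R] [AddCommGroup M]
    [Module R M] [AddCommGroup M'] [Module R M'] (f : M →ₗ[R] M')
    [Module.Projective R (range f)] : ∃ S : Submodule R M, IsCompl S (ker f) := by
  obtain ⟨σ, hσ⟩ := f.rangeRestrict.exists_rightInverse_of_surjective f.range_rangeRestrict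
  have hidem : IsIdempotentElem (σ ∘ₗ f.rangeRestrict) := by
    change (σ ∘ₗ f.rangeRestrict) ∘ₗ σ ∘ₗ f.rangeRestrict = σ ∘ₗ f.rangeRestrict
    rw [comp_assoc, ← comp_assoc _ σ, hσ, id_comp]
  have hker : ker (σ ∘ₗ f.rangeRestrict) = ker f := by
    rw [ker_comp_of_ker_eq_bot _ (ker_eq_bot_of_inverse hσ), ker_rangeRestrict]
  exact ⟨_, hker ▸ hidem.isCompl⟩

section NilpotentEndomorphism

variable {R P : Type*} [Ring R] [AddCommGroup P] [Module R P] {d : P →ₗ[R] P}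
  {S : Submodule R P} {n : ℕ}

theorem ker_pow_le_of_map_pow_le {T : Submodule R P} (hker : ker d ≤ S.map (d ^ n)) {s : ℕ}
    (hs : s ≤ n + 1) (hT : ∀ i ≤ n, n < i + s → S.map (d ^ i) ≤ T) : ker (d ^ s) ≤ T := by
  induction s with
  | zero => simp [Module.End.one_eq_id]
  | succ s ih =>
    intro x hx
    obtain ⟨i, rfl⟩ : ∃ i, n = s + i := Nat.exists_eq_add_of_le (by lia)
    have hdx : (d ^ s) x ∈ ker d := by rwa [mem_ker, ← Module.End.mul_apply, ← pow_succ']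
    obtain ⟨v, hvS, hv⟩ := hker hdx
    have hsub : x - (d ^ i) v ∈ ker (d ^ s) := by
      rw [mem_ker, map_sub, ← Module.End.mul_apply, ← pow_add, hv, sub_self]
    have hsubT := ih (by lia) (fun j hj hjs ↦ hT j hj (by lia)) hsub
    have hvT : (d ^ i) v ∈ T := hT i (by lia) (by lia) (Submodule.mem_map_of_mem hvS)
    simpa using T.add_mem hsubT hvT

theorem ker_pow_eq_range (hd : d ^ (n + 1) = 0) (hker : ker d ≤ range (d ^ n)) :
    ker (d ^ n) = range d := by
  apply le_antisymm
  · refine ker_pow_le_of_map_pow_le (S := ⊤) (by rwa [Submodule.map_top]) n.le_succ ?_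
    intro i _ hi
    obtain ⟨j, rfl⟩ : ∃ j, i = j + 1 := Nat.exists_eq_add_one.mpr (by lia)
    rw [Submodule.map_top, pow_succ']
    exact range_comp_le_range _ _
  · rw [range_le_ker_iff, ← hd, pow_succ]
    rfl

/-- The map `(v₀, …, v_{m-1}) ↦ ∑ dⁱ vᵢ` from `S ⊕ ⋯ ⊕ S` (`m` summands) to `P`. When `d ^ m = 0` it
intertwines the shift on `S ⊕ ⋯ ⊕ S` with `d`, so its bijectivity exhibits `P` as contractible. -/
def powSum (d : P →ₗ[R] P) (S : Submodule R P) (m : ℕ) : (Fin m → S) →ₗ[R] P :=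
  lsum R (fun _ ↦ S) ℕ fun i ↦ (d ^ (i : ℕ)).domRestrict S

theorem powSum_apply (m : ℕ) (v : Fin m → S) :
    powSum d S m v = ∑ i : Fin m, (d ^ (i : ℕ)) (v i : P) := by
  simp [powSum, lsum_apply]

theorem map_pow_le_range_powSum {i m : ℕ} (hi : i < m) :
    S.map (d ^ i) ≤ range (powSum d S m) := by
  rintro _ ⟨v, hv, rfl⟩
  exact ⟨Pi.single ⟨i, hi⟩ ⟨v, hv⟩, by simp only [powSum, lsum_piSingle, domRestrict_apply]⟩

theorem surjective_powSum (hd : d ^ (n + 1) = 0) (hker : ker d ≤ S.map (d ^ n)) :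
    Function.Surjective (powSum d S (n + 1)) := by
  rw [← range_eq_top, ← top_le_iff, ← (ker_eq_top (f := d ^ (n + 1))).mpr hd]
  exact ker_pow_le_of_map_pow_le hker le_rfl fun i hi _ ↦
    map_pow_le_range_powSum (Nat.lt_succ_of_le hi)

theorem pow_sub_powSum_of_forall_lt_eq_zero (hd : d ^ (n + 1) = 0) {v : Fin (n + 1) → S}
    {k : Fin (n + 1)} (hv : ∀ i < k, v i = 0) :
    (d ^ (n - k : ℕ)) (powSum d S (n + 1) v) = (d ^ n) (v k : P) := by
  rw [powSum_apply, map_sum]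
  simp only [← Module.End.mul_apply, ← pow_add]
  rw [Finset.sum_eq_single k, Nat.sub_add_cancel k.is_le]
  · intro i _ hik
    obtain hlt | hgt := lt_or_gt_of_ne hik
    · simp [hv i hlt]
    · rw [pow_eq_zero_of_le (by lia) hd, LinearMap.zero_apply]
  · simp

theorem injective_powSum (hd : d ^ (n + 1) = 0) (hS : Disjoint S (ker (d ^ n))) :
    Function.Injective (powSum d S (n + 1)) := by
  rw [injective_iff_map_eq_zero]
  intro v hv
  funext k
  induction k using WellFoundedLT.induction with
  | ind k ih =>
    have hk : (d ^ n) (v k : P) = 0 := by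
      rw [← pow_sub_powSum_of_forall_lt_eq_zero hd ih, hv, map_zero]
    exact Subtype.ext (Submodule.disjoint_def.mp hS _ (v k).2 hk)

theorem bijective_powSum (hd : d ^ (n + 1) = 0) (hker : ker d ≤ range (d ^ n))
    (hS : IsCompl S (ker (d ^ n))) : Function.Bijective (powSum d S (n + 1)) := by
  have hmap : S.map (d ^ n) = range (d ^ n) := by
    rw [← Submodule.map_top, ← hS.sup_eq_top, Submodule.map_sup,
      le_ker_iff_map.mp le_rfl, sup_bot_eq]
  exact ⟨injective_powSum hd hS.disjoint, surjective_powSum hd (hmap ▸ hker)⟩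

end NilpotentEndomorphism

theorem stmt_19_general {R : Type u} [Ring R] [Small.{v} R] {P : Type v} [AddCommGroup P]
    [Module R P] [Module.Projective R P] (n : ℕ) (d : P →ₗ[R] P) (hd : d ^ (n + 1) = 0)
    (hker : ker d ≤ range (d ^ n)) (hfin : projectiveDimension (ModuleCat.of R (ker d)) ≠ ⊤) :
    ∃ S : Submodule R P,
      Function.Bijective fun v : Fin (n + 1) → S ↦ ∑ i : Fin (n + 1), (d ^ (i : ℕ)) (v i : P) := by
  have hker_eq : ker d = range (d ^ n) := by
    refine hker.antisymm ?_
    rw [range_le_ker_iff, ← hd, pow_succ']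
    rfl
  have hproj : Module.Projective R (range (d ^ n)) := hker_eq ▸
    projective_ker_of_periodic_of_projectiveDimension_ne_top hker_eq (ker_pow_eq_range hd hker) hfin
  obtain ⟨S, hS⟩ := exists_isCompl_ker_of_projective_range (d ^ n)
  refine ⟨S, ?_⟩
  simp only [← powSum_apply]
  exact bijective_powSum hd hker hS

theorem stmt_19 (N : ℕ) (hN : 2 ≤ N) (R : Type) [Ring R]
    -- every `R`-module has finite projective dimension:
    (hdim : ∀ (M : Type) (i₁ : AddCommGroup M) (i₂ : @Module R M _ i₁.toAddCommMonoid),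
      @HasFinProjDim R _ M i₁ i₂)
    (P : Type) [AddCommGroup P] [Module R P] (hproj : Module.Projective R P)
    (d : P →ₗ[R] P) (hdN : d ^ N = 0)
    (hH : ∀ s : ℕ, 1 ≤ s → s ≤ N - 1 →
      LinearMap.ker (d ^ s) ≤ LinearMap.range (d ^ (N - s))) :
    ∃ S : Submodule R P,
      Function.Bijective (fun v : Fin N → ↥S => ∑ i : Fin N, (d ^ (i : ℕ)) (v i : P)) := by
  obtain ⟨n, rfl⟩ : ∃ n, N = n + 1 := Nat.exists_eq_add_one.mpr (by lia)
  exact stmt_19_general n d hdN (by simpa using hH 1 le_rfl (by lia))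
    (hdim _ _ _).projectiveDimension_ne_top
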